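/- Let T, L, ℓ be positive integers and let x ∈ {0,1}^{T×n} satisfy the min-up/min-down constraints with minimum uptime L and minimum downtime ℓ for units j and j'. Let t ∈ {L+1, …, T} be such that x_{t',j} = x_{t',j'} = 1 for all t' ∈ {t−L, …, t−1}. Define x' by swapping columns j and j' on rows t, …, T (i.e., x'_{s,j} = x_{s,j'} and x'_{s,j'} = x_{s,j} for s ≥ t, all other entries unchanged). Then x' also satisfies the min-up/min-down constraints with parameters L and ℓ for units j and j'. -/

import Mathlib

/-!
The swapped schedule of each unit is a splice: one schedule before `t`, followed by the other from
`t` on. By `MinUpDown.splice` such a splice of two admissible schedules is admissible when both are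
up on `{t - L, …, t - 1}`. Indeed the splice changes state at `t` only if the second schedule does,
and no minimum-time window opened before `t` reaches past `t - 1`: a start-up before `t` happens at
`t - L` or earlier, since both units are up on the `L` steps before `t`, and a downtime window
opened before `t` must have ended by `t - 1`, where the unit is up again.
-/

/-- The min-up/min-down constraints with minimum uptime `L` and minimum
downtime `ℓ` on the time horizon `{1, …, T}` for a single unit whose schedule
is `x : ℕ → ℤ` (`x t = 1` iff the unit is up at time `t`). -/
def MinUpDown (T L ℓ : ℕ) (x : ℕ → ℤ) : Prop :=
  (∀ t : ℕ, 2 ≤ t → t ≤ T → x (t - 1) = 0 → x t = 1 →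
    ∀ t' : ℕ, t ≤ t' → t' ≤ min (t + L - 1) T → x t' = 1) ∧
  (∀ t : ℕ, 2 ≤ t → t ≤ T → x (t - 1) = 1 → x t = 0 →
    ∀ t' : ℕ, t ≤ t' → t' ≤ min (t + ℓ - 1) T → x t' = 0)

/-- Following `a` before `t` and `b` from `t` on preserves the constraints, provided both are up
during the `L ≥ 1` time steps before `t`. -/
theorem MinUpDown.splice {T L ℓ t : ℕ} {a b : ℕ → ℤ} (ha : MinUpDown T L ℓ a)
    (hb : MinUpDown T L ℓ b) (hL : 0 < L) (ht1 : L + 1 ≤ t) (ht2 : t ≤ T)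
    (hup : ∀ s : ℕ, t - L ≤ s → s ≤ t - 1 → a s = 1 ∧ b s = 1) :
    MinUpDown T L ℓ (fun s => if t ≤ s then b s else a s) := by
  have hlast := hup (t - 1) (by omega) le_rfl
  refine ⟨fun s hs2 hsT h0 h1 s' hs hs' => ?_, fun s hs2 hsT h1 h0 s' hs hs' => ?_⟩
  · simp only at h0 h1 ⊢
    rcases lt_trichotomy s t with hst | rfl | hst
    · rw [if_neg (by omega)] at h0 h1
      have hle : s - 1 < t - L := by
        by_contra hcon
        have := (hup (s - 1) (by omega) (by omega)).1
        omega
      rw [if_neg (by omega)]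
      exact ha.1 s hs2 hsT h0 h1 s' hs hs'
    · rw [if_neg (by omega)] at h0
      omega
    · rw [if_pos (by omega)] at h0 h1 ⊢
      exact hb.1 s hs2 hsT h0 h1 s' hs hs'
  · simp only at h0 h1 ⊢
    rcases lt_or_ge s t with hst | hst
    · rw [if_neg (by omega)] at h0 h1
      have hlt : s' < t := by
        by_contra hcon
        -- The window would contain `t - 1`, where `a` is up.
        have := ha.2 s hs2 hsT h1 h0 (t - 1) (by omega) (by omega)
        omega
      rw [if_neg (by omega)]
      exact ha.2 s hs2 hsT h1 h0 s' hs hs'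
    · rw [if_pos hst] at h0
      rw [if_pos (by omega)]
      -- At `s = t` the preceding state is that of `a`, which agrees with `b` there.
      have hb1 : b (s - 1) = 1 := by
        rcases hst.eq_or_lt with rfl | hst
        · exact hlast.2
        · rwa [if_pos (by omega)] at h1
      exact hb.2 s hs2 hsT hb1 h0 s' hs hs'


/-- the shut-down sub-symmetry of the MUCP.  If units `j` and
`j'` are both ready to shut down at time `t` (both up throughout
`{t - L, …, t - 1}`), then swapping their schedules from time `t` onward
preserves the min-up/min-down constraints for both units. -/
theorem mucp_shutdown_subsymmetry (T L ℓ n : ℕ) (hT : 0 < T) (hL : 0 < L)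
    (hℓ : 0 < ℓ) (x : ℕ → ℕ → ℤ) (hbin : ∀ t u, x t u = 0 ∨ x t u = 1)
    (j j' : ℕ) (hj : 1 ≤ j ∧ j ≤ n) (hj' : 1 ≤ j' ∧ j' ≤ n)
    (hxj : MinUpDown T L ℓ (fun t => x t j))
    (hxj' : MinUpDown T L ℓ (fun t => x t j'))
    (t : ℕ) (ht1 : L + 1 ≤ t) (ht2 : t ≤ T)
    (hup : ∀ t' : ℕ, t - L ≤ t' → t' ≤ t - 1 → x t' j = 1 ∧ x t' j' = 1) :
    let x' : ℕ → ℕ → ℤ := fun s u =>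
      if t ≤ s then (if u = j then x s j' else if u = j' then x s j else x s u)
      else x s u
    MinUpDown T L ℓ (fun s => x' s j) ∧ MinUpDown T L ℓ (fun s => x' s j') := by
  intro x'
  have h₁ : (fun s => x' s j) = fun s => if t ≤ s then x s j' else x s j := by
    funext s
    simp [x']
  have h₂ : (fun s => x' s j') = fun s => if t ≤ s then x s j else x s j' := by
    funext s
    by_cases h : j' = j <;> simp [x', h]
  rw [h₁, h₂]
  exact ⟨hxj.splice hxj' hL ht1 ht2 hup,
    hxj'.splice hxj hL ht1 ht2 fun s h h' => (hup s h h').symm⟩
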